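/- arXiv:2412.14891 — 2 statements merged into one kernel-verified Lean document; each statement's English description precedes it below -/
import Mathlib

section
/- For every ε > 0 there exists n0 such that the following holds for every n ≥ n0. Let L be a simple graph on n vertices with at least (5/9 + ε)·binom(n,2) edges, and let C be a connected component of L containing the maximum number of edges among all connected components of L. Then C contains a triangle, i.e. three pairwise adjacent vertices of L all lying in C. -/
/-- The set of edges of `G` with both endpoints in the connected component `C`. -/
def compEdges {V : Type*} (G : SimpleGraph V) (C : G.ConnectedComponent) : Set (Sym2 V) :=
  {e | e ∈ G.edgeSet ∧ ∀ x ∈ e, G.connectedComponentMk x = C}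

/-!
Let `C` be a component with the most edges, of order `c`, and suppose that it is triangle-free. By
Mantel's theorem `C`, and hence every component, has at most `c ^ 2 / 4` edges; a component of order
`d` also has at most `d ^ 2 / 2` edges. So each component has at most `c * d / 2` edges (use the
first bound if `c ≤ d` and the second one otherwise), and a graph on `n` vertices has at most
`c ^ 2 / 4 + c * (n - c) / 2 = (n ^ 2 - (n - c) ^ 2) / 4 ≤ n ^ 2 / 4` edges in total. With Turán's
theorem in place of Mantel's, the same argument works for larger cliques.
-/

open SimpleGraph

section Turan

variable {V : Type*} [Finite V]

lemma two_mul_ncard_edgeSet_le_sq (G : SimpleGraph V) :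
    2 * G.edgeSet.ncard ≤ Nat.card V ^ 2 := by
  classical
  have := Fintype.ofFinite V
  rw [← coe_edgeFinset, Set.ncard_coe_finset, Nat.card_eq_fintype_card]
  calc 2 * G.edgeFinset.card
      ≤ 2 * (Fintype.card V).choose 2 := Nat.mul_le_mul_left 2 G.card_edgeFinset_le_card_choose_two
    _ = Fintype.card V * (Fintype.card V - 1) := by
        rw [Nat.choose_two_right, Nat.mul_div_cancel' (Nat.even_mul_pred_self _).two_dvd]
    _ ≤ Fintype.card V ^ 2 := by
        rw [sq]
        exact Nat.mul_le_mul_left _ (Nat.sub_le _ _)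

lemma mul_ncard_edgeSet_le_of_cliqueFree {G : SimpleGraph V} {r : ℕ} (hG : G.CliqueFree (r + 2)) :
    2 * (r + 1) * G.edgeSet.ncard ≤ r * Nat.card V ^ 2 := by
  classical
  have := Fintype.ofFinite V
  obtain ⟨H, _, hH⟩ := exists_isTuranMaximal (V := V) r.succ_pos
  have turan : G.edgeFinset.card ≤ (turanGraph (Fintype.card V) (r + 1)).edgeFinset.card := by
    rw [← (hH.nonempty_iso_turanGraph).some.card_edgeFinset_eq]
    exact hH.2 hG
  rw [← coe_edgeFinset, Set.ncard_coe_finset, Nat.card_eq_fintype_card]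
  exact (Nat.mul_le_mul_left _ turan).trans mul_card_edgeFinset_turanGraph_le

end Turan

section Components

variable {V : Type*} (G : SimpleGraph V)

lemma compEdges_eq_image_edgeSet (C : G.ConnectedComponent) :
    compEdges G C = Sym2.map (↑) '' C.toSimpleGraph.edgeSet := by
  ext e
  constructor
  · induction e with | h x y
    rintro ⟨hxy, hC⟩
    exact ⟨s(⟨x, hC x (Sym2.mem_mk_left x y)⟩, ⟨y, hC y (Sym2.mem_mk_right x y)⟩), hxy, rfl⟩
  · rintro ⟨e, he, rfl⟩
    induction e with | h x y
    refine ⟨he, fun z hz => ?_⟩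
    obtain rfl | rfl := Sym2.mem_iff.mp hz
    exacts [x.2, y.2]

lemma ncard_compEdges (C : G.ConnectedComponent) :
    (compEdges G C).ncard = C.toSimpleGraph.edgeSet.ncard := by
  rw [compEdges_eq_image_edgeSet]
  exact Set.ncard_image_of_injective _ (Sym2.map.injective Subtype.val_injective)

lemma pairwise_disjoint_compEdges : Pairwise (Function.onFun Disjoint (compEdges G)) := by
  intro C D hCD
  refine Set.disjoint_left.mpr fun e hC hD => hCD ?_
  exact (hC.2 _ e.out_fst_mem).symm.trans (hD.2 _ e.out_fst_mem)

lemma iUnion_compEdges : ⋃ C, compEdges G C = G.edgeSet := by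
  ext e
  refine ⟨fun he => (Set.mem_iUnion.mp he).choose_spec.1, fun he => ?_⟩
  induction e with | h x y
  refine Set.mem_iUnion.mpr ⟨G.connectedComponentMk x, he, fun z hz => ?_⟩
  obtain rfl | rfl := Sym2.mem_iff.mp hz
  exacts [rfl, (ConnectedComponent.connectedComponentMk_eq_of_adj he).symm]

variable [Finite V] [Fintype G.ConnectedComponent]

lemma sum_ncard_compEdges : ∑ C, (compEdges G C).ncard = G.edgeSet.ncard := by
  rw [← finsum_eq_sum_of_fintype, ← iUnion_compEdges,
    Set.ncard_iUnion_of_finite (fun C => Set.toFinite _) (pairwise_disjoint_compEdges G)]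

lemma sum_card_connectedComponent : ∑ C : G.ConnectedComponent, Nat.card C = Nat.card V := by
  rw [← Set.ncard_univ, ← iUnion_connectedComponentSupp, ← finsum_eq_sum_of_fintype,
    Set.ncard_iUnion_of_finite (fun C => Set.toFinite _)
      (pairwise_disjoint_supp_connectedComponent G)]
  rfl

end Components

section LargestComponent

variable {V : Type*} [Finite V] {G : SimpleGraph V} {C : G.ConnectedComponent} {r : ℕ}

lemma mul_ncard_compEdges_le_of_cliqueFree
    (hC : ∀ D : G.ConnectedComponent, (compEdges G D).ncard ≤ (compEdges G C).ncard)
    (hfree : C.toSimpleGraph.CliqueFree (r + 2)) (D : G.ConnectedComponent) :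
    (r + 1) * (compEdges G D).ncard ≤ r * (Nat.card C * Nat.card D) := by
  have bound_of_C : 2 * (r + 1) * (compEdges G D).ncard ≤ r * Nat.card C ^ 2 := by
    refine (Nat.mul_le_mul_left _ (hC D)).trans ?_
    rw [ncard_compEdges]
    exact mul_ncard_edgeSet_le_of_cliqueFree hfree
  have bound_of_D : 2 * (compEdges G D).ncard ≤ Nat.card D ^ 2 := by
    rw [ncard_compEdges]
    exact two_mul_ncard_edgeSet_le_sq _
  obtain rfl | hr := r.eq_zero_or_pos
  · lia
  obtain hCD | hDC := le_total (Nat.card C) (Nat.card D)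
  · have : r * Nat.card C ^ 2 ≤ r * (Nat.card C * Nat.card D) := by
      rw [sq]
      gcongr
    lia
  · have : (r + 1) * Nat.card D ^ 2 ≤ 2 * r * (Nat.card C * Nat.card D) := by
      rw [sq]
      gcongr
      lia
    have := Nat.mul_le_mul_left (r + 1) bound_of_D
    lia

theorem mul_ncard_edgeSet_le_of_cliqueFree_component
    (hC : ∀ D : G.ConnectedComponent, (compEdges G D).ncard ≤ (compEdges G C).ncard)
    (hfree : C.toSimpleGraph.CliqueFree (r + 2)) :
    2 * (r + 1) * G.edgeSet.ncard ≤ r * Nat.card V ^ 2 := by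
  classical
  have := Fintype.ofFinite G.ConnectedComponent
  set others : Finset G.ConnectedComponent := Finset.univ.erase C
  have edges_C : 2 * (r + 1) * (compEdges G C).ncard ≤ r * Nat.card C ^ 2 := by
    rw [ncard_compEdges]
    exact mul_ncard_edgeSet_le_of_cliqueFree hfree
  have edges_others : (r + 1) * ∑ D ∈ others, (compEdges G D).ncard
      ≤ r * (Nat.card C * ∑ D ∈ others, Nat.card D) := by
    simp only [Finset.mul_sum]
    exact Finset.sum_le_sum fun D _ => mul_ncard_compEdges_le_of_cliqueFree hC hfree D
  rw [← sum_ncard_compEdges, ← sum_card_connectedComponent G,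
    ← Finset.add_sum_erase _ _ (Finset.mem_univ C), ← Finset.add_sum_erase _ _ (Finset.mem_univ C)]
  calc 2 * (r + 1) * ((compEdges G C).ncard + ∑ D ∈ others, (compEdges G D).ncard)
      = 2 * (r + 1) * (compEdges G C).ncard
          + 2 * ((r + 1) * ∑ D ∈ others, (compEdges G D).ncard) := by ring
    _ ≤ r * Nat.card C ^ 2 + 2 * (r * (Nat.card C * ∑ D ∈ others, Nat.card D)) := by gcongr
    _ = r * (Nat.card C ^ 2 + 2 * Nat.card C * ∑ D ∈ others, Nat.card D) := by ring
    _ ≤ r * (Nat.card C + ∑ D ∈ others, Nat.card D) ^ 2 := by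
        rw [add_sq]
        exact Nat.mul_le_mul_left r (Nat.le_add_right _ _)

end LargestComponent

lemma sq_lt_four_mul_of_mul_choose_two_le {n m : ℕ} (hn : 11 ≤ n)
    (hm : (5 / 9 : ℝ) * n.choose 2 ≤ m) : n ^ 2 < 4 * m := by
  rw [Nat.cast_choose_two] at hm
  have hn' : (11 : ℝ) ≤ n := by exact_mod_cast hn
  have hlt : (n : ℝ) ^ 2 < 10 / 9 * (n * (n - 1)) := by nlinarith
  have : (n : ℝ) ^ 2 < 4 * m := by linarith
  exact_mod_cast this

theorem stmt_4_general {V : Type*} [Finite V] (G : SimpleGraph V)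
    (hG : Nat.card V ^ 2 < 4 * G.edgeSet.ncard) (C : G.ConnectedComponent)
    (hC : ∀ D : G.ConnectedComponent, (compEdges G D).ncard ≤ (compEdges G C).ncard) :
    ∃ x y z : V, G.Adj x y ∧ G.Adj y z ∧ G.Adj x z ∧
      G.connectedComponentMk x = C ∧ G.connectedComponentMk y = C ∧
      G.connectedComponentMk z = C := by
  classical
  have not_cliqueFree : ¬ C.toSimpleGraph.CliqueFree 3 := fun hfree => by
    have := mul_ncard_edgeSet_le_of_cliqueFree_component (r := 1) hC hfree
    lia
  obtain ⟨t, ht⟩ := not_forall_not.mp not_cliqueFree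
  obtain ⟨x, y, z, hxy, hxz, hyz, -⟩ := is3Clique_iff.mp ht
  exact ⟨x, y, z, hxy, hyz, hxz, x.2, y.2, z.2⟩

/-- For every `ε > 0` there exists `n0` such that for every `n ≥ n0`, if `L`
is a simple graph on `n` vertices with at least `(5/9 + ε)·C(n,2)` edges and `C` is a connected
component of `L` with the maximum number of edges among all components, then `C` contains a
triangle: three pairwise adjacent vertices of `L`, all lying in `C`. -/
theorem stmt_4 (ε : ℝ) (hε : 0 < ε) : ∃ n0 : ℕ, ∀ n : ℕ, n0 ≤ n →
    ∀ (V : Type) [Fintype V] [DecidableEq V], Fintype.card V = n →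
    ∀ (G : SimpleGraph V) [DecidableRel G.Adj],
      (5/9 + ε) * (n.choose 2 : ℝ) ≤ (G.edgeFinset.card : ℝ) →
      ∀ C : G.ConnectedComponent,
        (∀ D : G.ConnectedComponent, (compEdges G D).ncard ≤ (compEdges G C).ncard) →
        ∃ x y z : V, G.Adj x y ∧ G.Adj y z ∧ G.Adj x z ∧
          G.connectedComponentMk x = C ∧ G.connectedComponentMk y = C ∧
          G.connectedComponentMk z = C := by
  refine ⟨11, fun n hn V _ _ hV G _ hE C hC => stmt_4_general G ?_ C hC⟩
  rw [← coe_edgeFinset, Set.ncard_coe_finset, Nat.card_eq_fintype_card, hV]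
  exact sq_lt_four_mul_of_mul_choose_two_le hn <|
    (mul_le_mul_of_nonneg_right (by linarith) (Nat.cast_nonneg _)).trans hE
end

section
/- Let ℓ ≥ 2 and let L be an ℓ-graph with at least one edge. Then there exists a tight component C of L such that |C| · |∂L| ≥ e(L) · |∂C|, where ∂C denotes the set of (ℓ−1)-element vertex sets contained in at least one edge of C, and ∂L the set of (ℓ−1)-element vertex sets contained in at least one edge of L. -/
/-- A set `C` of edges of a `k`-graph is tight-connected: between any two edges of `C` there is
a finite sequence of edges from `C` in which consecutive edges intersect in `k−1` vertices. -/
def TightConn {V : Type*} [DecidableEq V] (k : ℕ) (C : Finset (Finset V)) : Prop :=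
  ∀ e ∈ C, ∀ f ∈ C, ∃ (m : ℕ) (w : ℕ → Finset V), w 0 = e ∧ w m = f ∧
    (∀ i ≤ m, w i ∈ C) ∧ (∀ i < m, ((w i) ∩ (w (i+1))).card = k - 1)

/-- The shadow of a set `C` of edges: the `j`-element vertex sets contained in some edge of `C`. -/
def shadowOf {V : Type*} [Fintype V] [DecidableEq V] (j : ℕ) (C : Finset (Finset V)) :
    Finset (Finset V) :=
  (Finset.univ.powersetCard j).filter (fun S => ∃ e ∈ C, S ⊆ e)

/-!
Two edges of an `ℓ`-graph sharing an `(ℓ-1)`-set are equal or adjacent, so distinct tight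
components have disjoint shadows. Hence `∑ |C| = e(L)` while `∑ |∂C| ≤ |∂L|`, both sums over the
tight components, and by averaging some component has `|C| / |∂C|` at least `e(L) / |∂L|`.
-/

open Finset

theorem exists_sum_mul_le_mul_sum {ι R : Type*} [NonUnitalNonAssocSemiring R] [LinearOrder R]
    [IsOrderedCancelAddMonoid R] {s : Finset ι} (hs : s.Nonempty) (a b : ι → R) :
    ∃ i ∈ s, (∑ j ∈ s, a j) * b i ≤ a i * ∑ j ∈ s, b j :=
  exists_le_of_sum_le hs (by rw [← mul_sum, ← sum_mul])

section Shadow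

variable {V : Type*} [Fintype V] [DecidableEq V] {j : ℕ} {C E : Finset (Finset V)} {S : Finset V}

theorem mem_shadowOf : S ∈ shadowOf j C ↔ #S = j ∧ ∃ e ∈ C, S ⊆ e := by
  simp [shadowOf]

theorem shadowOf_mono (h : C ⊆ E) : shadowOf j C ⊆ shadowOf j E :=
  monotone_filter_right _ fun _ _ ⟨e, he, hSe⟩ ↦ ⟨e, h he, hSe⟩

theorem sum_card_shadowOf_le {𝒞 : Finset (Finset (Finset V))} (hsub : ∀ C ∈ 𝒞, C ⊆ E)
    (hdisj : (𝒞 : Set (Finset (Finset V))).PairwiseDisjoint (shadowOf j)) :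
    ∑ C ∈ 𝒞, #(shadowOf j C) ≤ #(shadowOf j E) := by
  rw [← card_biUnion hdisj]
  exact card_le_card (biUnion_subset.2 fun C hC ↦ shadowOf_mono (hsub C hC))

end Shadow

section TightGraph

variable {V : Type*} [DecidableEq V] {k : ℕ} {C E : Finset (Finset V)} {e f S : Finset V}

/-- The adjacency graph of the edges of a `k`-graph with edge set `E`, whose reachability relation
is tight connectivity in `E`. Its vertex type is all of `Finset V`; the sets outside `E` are
isolated vertices. -/
def tightGraph (k : ℕ) (E : Finset (Finset V)) : SimpleGraph (Finset V) where
  Adj e f := e ≠ f ∧ e ∈ E ∧ f ∈ E ∧ #(e ∩ f) = k - 1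
  symm := ⟨fun e f ⟨hne, he, hf, h⟩ ↦ ⟨hne.symm, hf, he, by rwa [inter_comm]⟩⟩
  loopless := ⟨fun _ h ↦ h.1 rfl⟩

theorem mem_of_tightGraph_reachable (h : (tightGraph k E).Reachable e f) (he : e ∈ E) :
    f ∈ E := by
  obtain ⟨p⟩ := h.symm
  cases p with
  | nil => exact he
  | cons hadj _ => exact hadj.2.1

theorem tightGraph_reachable_of_card_inter (he : e ∈ E) (hf : f ∈ E) (h : #(e ∩ f) = k - 1) :
    (tightGraph k E).Reachable e f := by
  by_cases hef : e = f
  · exact hef ▸ .rfl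
  · exact SimpleGraph.Adj.reachable (G := tightGraph k E) ⟨hef, he, hf, h⟩

theorem TightConn.tightGraph_reachable (hC : TightConn k C) (hCE : C ⊆ E) (he : e ∈ C)
    (hf : f ∈ C) : (tightGraph k E).Reachable e f := by
  obtain ⟨m, w, rfl, rfl, hmem, hcard⟩ := hC e he f hf
  have reachable_of_le : ∀ i ≤ m, (tightGraph k E).Reachable (w 0) (w i) := by
    intro i hi
    induction i with
    | zero => exact .rfl
    | succ i ih =>
      exact (ih (by lia)).trans <| tightGraph_reachable_of_card_inter
        (hCE (hmem i (by lia))) (hCE (hmem (i + 1) hi)) (hcard i hi)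
  exact reachable_of_le m le_rfl

theorem card_inter_eq_pred (he : #e = k) (hf : #f = k) (hef : e ≠ f) (hS : #S = k - 1)
    (hSe : S ⊆ e) (hSf : S ⊆ f) : #(e ∩ f) = k - 1 := by
  have lower : #S ≤ #(e ∩ f) := card_le_card (subset_inter hSe hSf)
  have upper : #(e ∩ f) < #e := by
    refine card_lt_card (inter_subset_left.ssubset_of_ne fun h ↦ hef ?_)
    exact eq_of_subset_of_card_le (inter_eq_left.1 h) (by rw [he, hf])
  lia

theorem tightGraph_reachable_of_common_subset (hE : ∀ e ∈ E, #e = k) (he : e ∈ E) (hf : f ∈ E)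
    (hS : #S = k - 1) (hSe : S ⊆ e) (hSf : S ⊆ f) : (tightGraph k E).Reachable e f := by
  by_cases hef : e = f
  · exact hef ▸ .rfl
  · exact tightGraph_reachable_of_card_inter he hf
      (card_inter_eq_pred (hE e he) (hE f hf) hef hS hSe hSf)

open Classical in
/-- The partition of the edge set `E` of a `k`-graph into its tight components, encoded as the
classes of reachability in `tightGraph k E`. -/
noncomputable def tightComponents (k : ℕ) (E : Finset (Finset V)) : Finpartition E :=
  .ofSetSetoid (tightGraph k E).reachableSetoid E

namespace tightComponents

theorem mem_iff_reachable (hC : C ∈ (tightComponents k E).parts) (he : e ∈ C) :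
    f ∈ C ↔ (tightGraph k E).Reachable e f := by
  have heE : e ∈ E := (tightComponents k E).le hC he
  rw [← (tightComponents k E).part_eq_of_mem hC he, tightComponents,
    Finpartition.mem_part_ofSetSetoid_iff_rel]
  exact ⟨fun h ↦ h.2.2, fun h ↦ ⟨heE, mem_of_tightGraph_reachable h heE, h⟩⟩

theorem tightConn (hC : C ∈ (tightComponents k E).parts) : TightConn k C := by
  intro e he f hf
  obtain ⟨p⟩ := (mem_iff_reachable hC he).1 hf
  exact ⟨p.length, p.getVert, p.getVert_zero, p.getVert_length,
    fun i _ ↦ (mem_iff_reachable hC he).2 (p.take i).reachable,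
    fun i hi ↦ (p.adj_getVert_succ hi).2.2.2⟩

theorem eq_of_subset_of_tightConn {C' : Finset (Finset V)}
    (hC : C ∈ (tightComponents k E).parts) (hCC' : C ⊆ C') (hC'E : C' ⊆ E)
    (hC' : TightConn k C') : C' = C := by
  obtain ⟨e, he⟩ := (tightComponents k E).nonempty_of_mem_parts hC
  refine Subset.antisymm (fun f hf ↦ ?_) hCC'
  exact (mem_iff_reachable hC he).2 (hC'.tightGraph_reachable hC'E (hCC' he) hf)

theorem pairwiseDisjoint_shadowOf [Fintype V] (hE : ∀ e ∈ E, #e = k) :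
    ((tightComponents k E).parts : Set (Finset (Finset V))).PairwiseDisjoint
      (shadowOf (k - 1)) := by
  intro C hC D hD hCD
  refine disjoint_left.2 fun S hSC hSD ↦ hCD ?_
  obtain ⟨hS, e, he, hSe⟩ := mem_shadowOf.1 hSC
  obtain ⟨-, f, hf, hSf⟩ := mem_shadowOf.1 hSD
  have hef : (tightGraph k E).Reachable e f := tightGraph_reachable_of_common_subset hE
    ((tightComponents k E).le hC he) ((tightComponents k E).le hD hf) hS hSe hSf
  exact (tightComponents k E).eq_of_mem_parts hC hD ((mem_iff_reachable hC he).2 hef) hf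

end tightComponents

end TightGraph

/-- Let `ℓ ≥ 2` and let `L` be an `ℓ`-graph with at least one edge. Then there
exists a tight component `C` of `L` with `|C| · |∂L| ≥ e(L) · |∂C|`. -/
theorem stmt_10 {V : Type*} [Fintype V] [DecidableEq V] (ℓ : ℕ) (hℓ : 2 ≤ ℓ)
    (E : Finset (Finset V)) (hE : ∀ e ∈ E, e.card = ℓ) (hne : E.Nonempty) :
    ∃ C : Finset (Finset V), C ⊆ E ∧ C.Nonempty ∧ TightConn ℓ C ∧
      (∀ C' : Finset (Finset V), C ⊆ C' → C' ⊆ E → TightConn ℓ C' → C' = C) ∧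
      E.card * (shadowOf (ℓ-1) C).card ≤ C.card * (shadowOf (ℓ-1) E).card := by
  obtain ⟨e, he⟩ := hne
  have hparts : (tightComponents ℓ E).parts.Nonempty :=
    ⟨_, (tightComponents ℓ E).part_mem.2 he⟩
  obtain ⟨C, hC, havg⟩ := exists_sum_mul_le_mul_sum hparts card fun C ↦ #(shadowOf (ℓ - 1) C)
  refine ⟨C, (tightComponents ℓ E).le hC, (tightComponents ℓ E).nonempty_of_mem_parts hC,
    tightComponents.tightConn hC, fun C' ↦ tightComponents.eq_of_subset_of_tightConn hC, ?_⟩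
  calc #E * #(shadowOf (ℓ - 1) C)
      = (∑ D ∈ (tightComponents ℓ E).parts, #D) * #(shadowOf (ℓ - 1) C) := by
        rw [Finpartition.sum_card_parts]
    _ ≤ #C * ∑ D ∈ (tightComponents ℓ E).parts, #(shadowOf (ℓ - 1) D) := havg
    _ ≤ #C * #(shadowOf (ℓ - 1) E) := by
        gcongr
        exact sum_card_shadowOf_le (fun D ↦ (tightComponents ℓ E).le)
          (tightComponents.pairwiseDisjoint_shadowOf hE)
end
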